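/- Let f be a rational map of degree at least 2 with Julia set J. Then {x ∈ J : χ̄(x) > α⁺} = ∅. Moreover, if J does not contain any critical point of f, then also {x ∈ J : χ̲(x) < α⁻} = ∅. -/

import Mathlib

open Filter Set Metric MeasureTheory Topology
open scoped ENNReal NNReal

noncomputable section

/-! ### The Riemann sphere with the chordal (spherical) metric -/

/-- The Riemann sphere `ℂ ∪ {∞}`. -/
structure RSphere : Type where
  val : Option ℂ

namespace RSphere

/-- The inclusion of `ℂ` into the Riemann sphere. -/
def ofC (z : ℂ) : RSphere := ⟨some z⟩

/-- The point at infinity. -/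
def infty : RSphere := ⟨none⟩

/-- Case elimination on a point of the Riemann sphere. -/
def elim {α : Sort*} (x : RSphere) (i : α) (h : ℂ → α) : α := Option.elim x.val i h

/-- Stereographic embedding of the Riemann sphere onto the round unit sphere in
`ℝ³ = ℂ ×₂ ℝ`.  It induces the chordal (spherical) metric on `RSphere`. -/
def embed (x : RSphere) : WithLp 2 (ℂ × ℝ) :=
  elim x ((WithLp.equiv 2 (ℂ × ℝ)).symm (0, 1))
    fun z => (WithLp.equiv 2 (ℂ × ℝ)).symm
      (((2 / (‖z‖ ^ 2 + 1)) : ℝ) • z, (‖z‖ ^ 2 - 1) / (‖z‖ ^ 2 + 1))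

/-- Inverse of the stereographic embedding. -/
def unembed (v : WithLp 2 (ℂ × ℝ)) : RSphere :=
  if (WithLp.equiv 2 (ℂ × ℝ) v).2 = 1 then infty
  else ofC ((1 - (WithLp.equiv 2 (ℂ × ℝ) v).2)⁻¹ • (WithLp.equiv 2 (ℂ × ℝ) v).1)

lemma leftInverse_unembed : Function.LeftInverse unembed embed := by
  rintro ⟨x⟩
  cases x with
  | none =>
      simp [embed, unembed, elim, infty]
  | some z =>
      have h1 : (0 : ℝ) < ‖z‖ ^ 2 + 1 := by positivity
      have ht : (‖z‖ ^ 2 - 1) / (‖z‖ ^ 2 + 1) ≠ 1 := by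
        intro h
        rw [div_eq_one_iff_eq h1.ne'] at h
        linarith
      simp only [embed, unembed, elim, Option.elim, Equiv.apply_symm_apply, ht, if_false, ofC]
      congr 2
      rw [smul_smul]
      have h2 : 1 - (‖z‖ ^ 2 - 1) / (‖z‖ ^ 2 + 1) = 2 / (‖z‖ ^ 2 + 1) := by
        field_simp
        ring
      rw [h2]
      rw [inv_mul_cancel₀ (by positivity), one_smul]

lemma embed_injective : Function.Injective embed := leftInverse_unembed.injective

/-- The chordal metric on the Riemann sphere, induced by the stereographic embedding
onto the round unit sphere in Euclidean 3-space. -/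
instance : MetricSpace RSphere := MetricSpace.induced embed embed_injective inferInstance

instance : MeasurableSpace RSphere := borel RSphere

instance : BorelSpace RSphere := ⟨rfl⟩

/-- Reading off a finite point (junk value `0` at `∞`). -/
def toC (x : RSphere) : ℂ := elim x 0 id

/-- The involution `z ↦ 1/z` of the Riemann sphere. -/
def inv (x : RSphere) : RSphere :=
  elim x (ofC 0) fun z => if z = 0 then infty else ofC z⁻¹

end RSphere

/-! ### Basic dynamical notions -/

/-- The norm of the derivative of `g` at `x`, measured in the spherical metric
(for a rational map this is the usual norm of the spherical derivative). -/
def sphDeriv (g : RSphere → RSphere) (x : RSphere) : ℝ :=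
  limsup (fun y => dist (g y) (g x) / dist y x) (𝓝[≠] x)

/-- The set of critical points. -/
def critSet (g : RSphere → RSphere) : Set RSphere := {x | sphDeriv g x = 0}

/-- The Fatou set: points having a neighbourhood on which the family of iterates is
equicontinuous (i.e. normal). -/
def fatouSet (f : RSphere → RSphere) : Set RSphere :=
  {x | ∃ U : Set RSphere, IsOpen U ∧ x ∈ U ∧ EquicontinuousOn (fun n : ℕ => f^[n]) U}

/-- The Julia set. -/
def juliaSet (f : RSphere → RSphere) : Set RSphere := (fatouSet f)ᶜ

/-- `f` is the rational map on the Riemann sphere given by the coprime pair of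
polynomials `p`, `q`. -/
structure IsRationalMap (f : RSphere → RSphere) (p q : Polynomial ℂ) : Prop where
  coprime : IsCoprime p q
  continuous : Continuous f
  eval : ∀ z : ℂ, q.eval z ≠ 0 → f (RSphere.ofC z) = RSphere.ofC (p.eval z / q.eval z)

/-- The degree of the rational map `p/q`. -/
def ratDeg (p q : Polynomial ℂ) : ℕ := max p.natDegree q.natDegree

/-- The lower Lyapunov exponent `χ̲(x) = liminf (1/n) log |(fⁿ)'(x)|`, as an extended real. -/
def lyapLower (f : RSphere → RSphere) (x : RSphere) : EReal :=
  liminf (fun n : ℕ => ((Real.log (sphDeriv (f^[n]) x) / n : ℝ) : EReal)) atTop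

/-- The upper Lyapunov exponent `χ̄(x) = limsup (1/n) log |(fⁿ)'(x)|`, as an extended real. -/
def lyapUpper (f : RSphere → RSphere) (x : RSphere) : EReal :=
  limsup (fun n : ℕ => ((Real.log (sphDeriv (f^[n]) x) / n : ℝ) : EReal)) atTop

/-- The level set `𝓛(a,b)` of points of the Julia set with lower exponent `a` and
upper exponent `b`. -/
def levelSet (f : RSphere → RSphere) (a b : EReal) : Set RSphere :=
  {x | x ∈ juliaSet f ∧ lyapLower f x = a ∧ lyapUpper f x = b}

/-- The set `𝓛̂(α,β)` of points of the Julia set with `χ̲ ≤ β`, `χ̄ ≥ α` and `χ̄ > 0`. -/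
def levelHat (f : RSphere → RSphere) (α β : ℝ) : Set RSphere :=
  {x | x ∈ juliaSet f ∧ lyapLower f x ≤ (β : EReal) ∧ (α : EReal) ≤ lyapUpper f x ∧
    0 < lyapUpper f x}

/-- Birkhoff sum `S_m φ = φ + φ∘g + ⋯ + φ∘g^{m-1}`. -/
def birkhoff (g : RSphere → RSphere) (φ : RSphere → ℝ) (m : ℕ) (x : RSphere) : ℝ :=
  ∑ k ∈ Finset.range m, φ (g^[k] x)

/-- An `(m,ε)`-separated finite subset of `Λ` for the map `g`. -/
def IsSepSet (g : RSphere → RSphere) (Λ : Set RSphere) (m : ℕ) (ε : ℝ)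
    (E : Finset RSphere) : Prop :=
  ↑E ⊆ Λ ∧ ∀ x ∈ E, ∀ y ∈ E, x ≠ y → ∃ k < m, ε ≤ dist (g^[k] x) (g^[k] y)

/-- Topological pressure of the potential `φ` for `g` restricted to `Λ`,
defined à la Bowen via `(m,ε)`-separated sets. -/
def pressureOn (g : RSphere → RSphere) (Λ : Set RSphere) (φ : RSphere → ℝ) : ℝ :=
  ⨆ ε : {ε : ℝ // 0 < ε}, limsup (fun m : ℕ =>
    Real.log (⨆ E : {E : Finset RSphere // IsSepSet g Λ m ε.1 E},
      ∑ x ∈ E.1, Real.exp (birkhoff g φ m x)) / m) atTop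

/-- `g` is uniformly expanding on `Λ`: `|(gᵐ)'(x)| ≥ c λᵐ` for some `c > 0`, `λ > 1`. -/
def ExpandingOn (g : RSphere → RSphere) (Λ : Set RSphere) : Prop :=
  ∃ c > (0 : ℝ), ∃ l : ℝ, 1 < l ∧ ∀ x ∈ Λ, ∀ m : ℕ, 1 ≤ m → c * l ^ m ≤ sphDeriv (g^[m]) x

/-- `Λ` is a repeller for `g`: a compact invariant isolated set. -/
def IsRepeller (g : RSphere → RSphere) (Λ : Set RSphere) : Prop :=
  IsCompact Λ ∧ g '' Λ = Λ ∧
    ∃ U : Set RSphere, IsOpen U ∧ Λ ⊆ U ∧ ∀ x, (∀ m : ℕ, g^[m] x ∈ U) → x ∈ Λ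

/-- Topological transitivity of `g` on `Λ`. -/
def TopTransOn (g : RSphere → RSphere) (Λ : Set RSphere) : Prop :=
  ∀ U V : Set RSphere, IsOpen U → IsOpen V → (U ∩ Λ).Nonempty → (V ∩ Λ).Nonempty →
    ∃ m : ℕ, (g^[m] '' (U ∩ Λ) ∩ V).Nonempty

/-- The topological pressure of `φ` with respect to `f` on its Julia set, given by
the supremum of the pressures on compact invariant uniformly expanding subsets of `J`. -/
def pressureTop (f : RSphere → RSphere) (φ : RSphere → ℝ) : ℝ :=
  ⨆ L : {L : Set RSphere //
      L.Nonempty ∧ L ⊆ juliaSet f ∧ IsCompact L ∧ f '' L = L ∧ ExpandingOn f L},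
    pressureOn f L.1 φ

/-- The pressure function `d ↦ P(φ_d)` where `φ_d = -d log|f'|`. -/
def pressFamily (f : RSphere → RSphere) (d : ℝ) : ℝ :=
  pressureTop f fun x => -d * Real.log (sphDeriv f x)

/-- `F(α) = α⁻¹ inf_d (Q(d) + dα)` associated with a pressure function `Q` (for `α ≠ 0`). -/
def specF (Q : ℝ → ℝ) (α : ℝ) : EReal :=
  ((α⁻¹ : ℝ) : EReal) * ⨅ d : ℝ, ((Q d + d * α : ℝ) : EReal)

/-- `F(0) = lim_{α → 0⁺} F(α)`. -/
def specF0 (Q : ℝ → ℝ) : EReal := limsup (fun α : ℝ => specF Q α) (𝓝[>] (0 : ℝ))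

/-- The full spectrum function `F` associated with a pressure function `Q`. -/
def specFext (Q : ℝ → ℝ) (α : ℝ) : EReal := if α = 0 then specF0 Q else specF Q α

/-- The Lyapunov spectrum function `F` of `f`. -/
def Ffun (f : RSphere → RSphere) (α : ℝ) : EReal := specFext (pressFamily f) α

/-- `α⁻ = lim_{d → +∞} -Q(d)/d` for a pressure function `Q`. -/
def alphaMinusOf (Q : ℝ → ℝ) : ℝ := limsup (fun d : ℝ => -Q d / d) atTop

/-- `α⁺ = lim_{d → -∞} -Q(d)/d` for a pressure function `Q`. -/
def alphaPlusOf (Q : ℝ → ℝ) : ℝ := limsup (fun d : ℝ => -Q d / d) atBot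

/-- `α⁻` for the map `f`. -/
def alphaMinus (f : RSphere → RSphere) : ℝ := alphaMinusOf (pressFamily f)

/-- `α⁺` for the map `f`. -/
def alphaPlus (f : RSphere → RSphere) : ℝ := alphaPlusOf (pressFamily f)

/-- The Lyapunov exponent `χ(μ) = ∫ log|g'| dμ` of a measure. -/
def lyapMeas (g : RSphere → RSphere) (μ : Measure RSphere) : ℝ :=
  ∫ x, Real.log (sphDeriv g x) ∂μ

/-- `α⁻` as the infimum of Lyapunov exponents of invariant probability measures on `J`. -/
def alphaMinusMeas (f : RSphere → RSphere) : ℝ :=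
  sInf {r : ℝ | ∃ μ : Measure RSphere, IsProbabilityMeasure μ ∧ MeasurePreserving f μ μ ∧
    μ (juliaSet f)ᶜ = 0 ∧ r = lyapMeas f μ}

/-- `α⁺` as the supremum of Lyapunov exponents of invariant probability measures on `J`. -/
def alphaPlusMeas (f : RSphere → RSphere) : ℝ :=
  sSup {r : ℝ | ∃ μ : Measure RSphere, IsProbabilityMeasure μ ∧ MeasurePreserving f μ μ ∧
    μ (juliaSet f)ᶜ = 0 ∧ r = lyapMeas f μ}

/-- The maximal distortion `sup_{x,y ∈ Z} |g'(x)|/|g'(y)|` of `g` on `Z`. -/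
def distortionOn (g : RSphere → RSphere) (Z : Set RSphere) : ℝ :=
  sSup {r : ℝ | ∃ x ∈ Z, ∃ y ∈ Z, r = sphDeriv g x / sphDeriv g y}

/-- Conical points. -/
def IsConical (f : RSphere → RSphere) (x : RSphere) : Prop :=
  ∃ r : ℝ, 0 < r ∧ ∃ K : ℝ, ∃ n : ℕ → ℕ, StrictMono n ∧ ∃ U : ℕ → Set RSphere,
    ∀ i, U i ∈ 𝓝 x ∧ ball (f^[n i] x) r ⊆ f^[n i] '' U i ∧ distortionOn (f^[n i]) (U i) ≤ K

/-- A non-immediately postcritical point: there is a backward orbit through it that is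
dense in the Julia set and avoids the critical points. -/
def NonImmPostCrit (f : RSphere → RSphere) (x : RSphere) : Prop :=
  ∃ b : ℕ → RSphere, b 0 = x ∧ (∀ n, f (b (n + 1)) = b n) ∧
    juliaSet f ⊆ closure (Set.range b) ∧ ∀ n, b n ∉ critSet f

/-- `f` is exceptional: there is a finite nonempty set `Σ_f` with `f⁻¹(Σ_f) \ Crit = Σ_f`. -/
def IsExceptional (f : RSphere → RSphere) : Prop :=
  ∃ S : Set RSphere, S.Finite ∧ S.Nonempty ∧ f ⁻¹' S \ critSet f = S

/-- The largest exceptional set `Σ` of `f`. -/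
def maxExceptional (f : RSphere → RSphere) : Set RSphere :=
  ⋃₀ {S : Set RSphere | S.Finite ∧ S.Nonempty ∧ f ⁻¹' S \ critSet f = S}

/-- `0` not being exceptional, or having exceptional set away from the Julia set. -/
def GoodExc (f : RSphere → RSphere) : Prop :=
  ¬ IsExceptional f ∨ maxExceptional f ∩ juliaSet f = ∅

/-- A parabolic periodic point at a finite point `z`: a periodic point whose multiplier
is a root of unity. -/
def IsParabolicFix (g : RSphere → RSphere) (z : ℂ) : Prop :=
  ∃ m : ℕ, 0 < m ∧ g^[m] (RSphere.ofC z) = RSphere.ofC z ∧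
    ∃ lam : ℂ, (∃ k : ℕ, 0 < k ∧ lam ^ k = 1) ∧
      HasDerivAt (fun w => RSphere.toC (g^[m] (RSphere.ofC w))) lam z

/-- A parabolic periodic point of `f` (at a finite point, or at `∞` read in the chart `1/z`). -/
def IsParabolic (f : RSphere → RSphere) (x : RSphere) : Prop :=
  (∃ z : ℂ, x = RSphere.ofC z ∧ IsParabolicFix f z) ∨
  (x = RSphere.infty ∧ IsParabolicFix (fun y => RSphere.inv (f (RSphere.inv y))) 0)

/-- A recurrent point. -/
def IsRecurrentPt (f : RSphere → RSphere) (x : RSphere) : Prop :=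
  ∃ n : ℕ → ℕ, StrictMono n ∧ Tendsto (fun i => f^[n i] x) atTop (𝓝 x)

/-! ### Graph directed systems and expanding Cantor repellers -/

/-- A graph directed system (GDS) satisfying the strong separation condition with
respect to the map `g`. -/
structure GDS (g : RSphere → RSphere) where
  /-- number of vertices -/
  n : ℕ
  npos : 0 < n
  /-- the open domains -/
  U : Fin n → Set RSphere
  /-- the admissible edges -/
  edge : Fin n → Fin n → Prop
  /-- the inverse branches -/
  br : Fin n → Fin n → RSphere → RSphere
  isOpen : ∀ k, IsOpen (U k)
  isConnected : ∀ k, IsConnected (U k)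
  disjClosure : ∀ k l, k ≠ l → closure (U k) ∩ closure (U l) = ∅
  mapsTo : ∀ k l, edge k l → Set.MapsTo (br k l) (closure (U l)) (U k)
  isBranch : ∀ k l, edge k l → ∀ x ∈ closure (U l), g (br k l x) = x
  bddDistortion : ∃ C : ℝ, ∀ k l, edge k l → distortionOn (br k l) (closure (U l)) ≤ C

/-- The cylinder sets of depth `m` of a GDS. -/
def gdsCyl {g : RSphere → RSphere} (G : GDS g) : ℕ → Set RSphere
  | 0 => ⋃ k, G.U k
  | m + 1 => ⋃ (k : Fin G.n) (l : Fin G.n) (_ : G.edge k l),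
      G.br k l '' (gdsCyl G m ∩ G.U l)

/-- The limit set of a GDS. -/
def gdsLimit {g : RSphere → RSphere} (G : GDS g) : Set RSphere := ⋂ m, gdsCyl G m

/-- An expanding Cantor repeller (ECR) for `g`: a uniformly expanding repeller which is
the limit set of a GDS satisfying the strong separation condition, with `g(Λ) = Λ`. -/
def IsECR (g : RSphere → RSphere) (Λ : Set RSphere) : Prop :=
  ExpandingOn g Λ ∧ IsRepeller g Λ ∧ ∃ G : GDS g, gdsLimit G = Λ

/-- A Cantor set: compact, perfect and totally disconnected. -/
def IsCantorSet (s : Set RSphere) : Prop :=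
  IsCompact s ∧ Perfect s ∧ IsTotallyDisconnected s

/-! ### Entropy, equilibrium states and dimensions -/

/-- The entropy of a countable partition (given by the fibers of `p`). -/
def partEntropy {ι : Type} [Countable ι] (μ : Measure RSphere) (p : RSphere → ι) : ℝ :=
  ∑' i : ι, Real.negMulLog (μ (p ⁻¹' {i})).toReal

/-- Measure-theoretic (Kolmogorov–Sinai) entropy of `T` with respect to `μ`:
supremum over finite measurable partitions of the exponential growth rate of the
entropies of the dynamical refinements. -/
def entropyOf (T : RSphere → RSphere) (μ : Measure RSphere) : ℝ :=
  ⨆ p : {p : RSphere → ℕ // Measurable p ∧ (Set.range p).Finite},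
    ⨅ n : {n : ℕ // 0 < n},
      partEntropy μ (fun x => fun k : Fin n.1 => p.1 (T^[(k : ℕ)] x)) / (n.1 : ℝ)

/-- An equilibrium state for the potential `φ` with respect to `g` restricted to `Λ`. -/
def IsEquilibrium (g : RSphere → RSphere) (Λ : Set RSphere) (φ : RSphere → ℝ)
    (μ : Measure RSphere) : Prop :=
  IsProbabilityMeasure μ ∧ μ Λᶜ = 0 ∧ MeasurePreserving g μ μ ∧
    entropyOf g μ + ∫ x, φ x ∂μ = pressureOn g Λ φ

/-- The Hausdorff dimension of a measure: the infimum of the Hausdorff dimensions of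
sets of full measure. -/
def dimHMeasure (μ : Measure RSphere) : ℝ≥0∞ :=
  ⨅ (s : Set RSphere) (_ : μ sᶜ = 0), dimH s

/-- The minimal number of `ε`-balls needed to cover `s`. -/
def coverNum (s : Set RSphere) (ε : ℝ) : ℕ :=
  sInf {n : ℕ | ∃ t : Finset RSphere, t.card = n ∧ s ⊆ ⋃ x ∈ t, ball x ε}

/-- The upper box-counting dimension. -/
def upperBoxDim (s : Set RSphere) : ℝ :=
  limsup (fun n : ℕ => Real.log (coverNum s (1 / n)) / Real.log n) atTop

/-- The packing dimension, via countable covers and upper box dimensions. -/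
def dimP (s : Set RSphere) : ℝ≥0∞ :=
  ⨅ c : {c : ℕ → Set RSphere // s ⊆ ⋃ n, c n},
    ⨆ n : ℕ, ENNReal.ofReal (upperBoxDim (c.1 n))

/-- The connected component of `y` in `g⁻¹(B)`: the pull-back of `B` along the inverse
branch of `g` sending (the image of) `y` to `y`. -/
def invBranchSet (g : RSphere → RSphere) (B : Set RSphere) (y : RSphere) : Set RSphere :=
  connectedComponentIn (g ⁻¹' B) y

end

/-!
A rational map is conformal for the chordal metric, so `|f'|` is a continuous function, the chain
rule holds, and `log |(f^n)'|` is a Birkhoff sum of `log |f'|`.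

If `χ̄(x) > c`, then arbitrarily long pieces of the orbit of `x` carry an average of `log |f'|` of
at least `c`. By the Krylov–Bogolyubov argument the uniform distributions on these pieces accumulate
on an invariant probability measure `μ` on `J`. Every truncation `max (log |f'|) (-M)` is
continuous, hence has integral at least `c`, and letting `M → ∞` gives `χ(μ) ≥ c` by monotone
convergence. If `J` contains no critical point, then `log |f'|` is continuous on `J` and no
truncation is needed, so that the same argument works with the inequalities reversed.

Since `Real.log 0 = 0`, the logarithm of a vanishing derivative exceeds every `c < 0`, and the
first argument only applies to `c > 0`. It is therefore completed by `α⁺ ≥ 0`: otherwise some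
iterate contracts distances near every point of `J`, which makes the iterates equicontinuous there.
-/

open Asymptotics

/-! ### Conformal derivatives in metric spaces -/

section ConformalDerivative

variable {X Y Z : Type*} [PseudoMetricSpace X] [PseudoMetricSpace Y] [PseudoMetricSpace Z]

/-- The map `g` is metrically conformal at `x` with scaling factor `D`: it multiplies distances by
`D` up to an error that is small relative to the distance. Both points vary near `x`, so this is a
metric analogue of strict differentiability. -/
def HasConfDerivAt (g : X → Y) (D : ℝ) (x : X) : Prop :=
  (fun p : X × X => dist (g p.1) (g p.2) - D * dist p.1 p.2) =o[𝓝 (x, x)] fun p => dist p.1 p.2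

/-- The map `g` is metrically conformal at `x`, with some scaling factor. -/
def ConfDifferentiableAt (g : X → Y) (x : X) : Prop :=
  ∃ D, HasConfDerivAt g D x

/-- The map `g` is metrically conformal at every point. -/
def ConfDifferentiable (g : X → Y) : Prop :=
  ∀ x, ConfDifferentiableAt g x

namespace HasConfDerivAt

lemma of_dist_eq_mul {g : X → Y} {x : X} {K : X × X → ℝ} (hK : ContinuousAt K (x, x))
    (h : ∀ᶠ p : X × X in 𝓝 (x, x), dist (g p.1) (g p.2) = K p * dist p.1 p.2) :
    HasConfDerivAt g (K (x, x)) x := by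
  have hK0 : (fun p => K p - K (x, x)) =o[𝓝 (x, x)] fun _ => (1 : ℝ) :=
    (isLittleO_one_iff ℝ).2 (tendsto_sub_nhds_zero_iff.2 hK)
  refine (hK0.mul_isBigO (isBigO_refl (fun p : X × X => dist p.1 p.2) _)).congr' ?_ ?_
  · filter_upwards [h] with p hp
    rw [hp, sub_mul]
  · simp

protected lemma id (x : X) : HasConfDerivAt (id : X → X) 1 x :=
  of_dist_eq_mul (K := fun _ => 1) continuousAt_const (by simp)

lemma of_isometry {g : X → Y} (hg : Isometry g) (x : X) : HasConfDerivAt g 1 x :=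
  of_dist_eq_mul (K := fun _ => 1) continuousAt_const (by simp [hg.dist_eq])

lemma of_hasStrictDerivAt {g : ℂ → ℂ} {g' z : ℂ} (h : HasStrictDerivAt g g' z) :
    HasConfDerivAt g ‖g'‖ z := by
  refine isLittleO_iff.2 fun ε hε => ?_
  filter_upwards [h.isLittleO.def hε] with p hp
  rw [dist_eq_norm, dist_eq_norm, ← norm_mul, Real.norm_eq_abs, norm_norm]
  refine (abs_norm_sub_norm_le _ _).trans ?_
  simpa [mul_comm] using hp

variable {g : X → Y} {D E : ℝ} {x : X}

lemma congr {g' : X → Y} (h : HasConfDerivAt g D x) (hg : g =ᶠ[𝓝 x] g') :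
    HasConfDerivAt g' D x := by
  refine IsLittleO.congr' h ?_ .rfl
  filter_upwards [hg.prodMk_nhds hg] with p hp
  rw [hp.1, hp.2]

lemma isBigO (h : HasConfDerivAt g D x) :
    (fun p : X × X => dist (g p.1) (g p.2)) =O[𝓝 (x, x)] fun p => dist p.1 p.2 :=
  ((IsLittleO.isBigO h).add (isBigO_const_mul_self D (fun p : X × X => dist p.1 p.2) _)).congr_left
    fun _ => sub_add_cancel _ _

lemma eventually_dist_le {C : ℝ} (h : HasConfDerivAt g D x) (hC : D < C) :
    ∀ᶠ p : X × X in 𝓝 (x, x), dist (g p.1) (g p.2) ≤ C * dist p.1 p.2 := by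
  filter_upwards [IsLittleO.def h (sub_pos.2 hC)] with p hp
  rw [Real.norm_of_nonneg dist_nonneg] at hp
  linarith [le_of_abs_le hp]

lemma continuousAt (h : HasConfDerivAt g D x) : ContinuousAt g x := by
  have hpair : Tendsto (fun y : X => (y, x)) (𝓝 x) (𝓝 (x, x)) :=
    (Continuous.prodMk_left x).tendsto x
  refine tendsto_iff_dist_tendsto_zero.2 ((h.isBigO.comp_tendsto hpair).trans_tendsto ?_)
  exact tendsto_iff_dist_tendsto_zero.1 tendsto_id

lemma comp {f : Y → Z} (hf : HasConfDerivAt f E (g x)) (hg : HasConfDerivAt g D x) :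
    HasConfDerivAt (f ∘ g) (E * D) x := by
  have hpair : Tendsto (Prod.map g g) (𝓝 (x, x)) (𝓝 (g x, g x)) := by
    simpa only [nhds_prod_eq] using hg.continuousAt.tendsto.prodMap hg.continuousAt.tendsto
  have hf' := (IsLittleO.comp_tendsto hf hpair).trans_isBigO hg.isBigO
  refine (hf'.add (IsLittleO.const_mul_left hg E)).congr_left fun p => ?_
  simp only [Function.comp_apply, Prod.map_fst, Prod.map_snd]
  ring

lemma iterate {f : X → X} {D : X → ℝ} (h : ∀ x, HasConfDerivAt f (D x) x) (n : ℕ) (x : X) :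
    HasConfDerivAt f^[n] (∏ i ∈ Finset.range n, D (f^[i] x)) x := by
  induction n with
  | zero => simpa using HasConfDerivAt.id x
  | succ n ih =>
    rw [Finset.prod_range_succ, mul_comm, Function.iterate_succ']
    exact (h _).comp ih

end HasConfDerivAt

end ConformalDerivative

namespace HasConfDerivAt

variable {X Y : Type*} [MetricSpace X] [PseudoMetricSpace Y] {g : X → Y}

lemma tendsto_dist_div_dist {D : ℝ} {x : X} (h : HasConfDerivAt g D x) :
    Tendsto (fun y => dist (g y) (g x) / dist y x) (𝓝[≠] x) (𝓝 D) := by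
  have hpair : Tendsto (fun y : X => (y, x)) (𝓝[≠] x) (𝓝 (x, x)) :=
    ((Continuous.prodMk_left x).tendsto x).mono_left nhdsWithin_le_nhds
  have hlim := ((IsLittleO.comp_tendsto h hpair).tendsto_div_nhds_zero).add_const D
  rw [zero_add] at hlim
  refine hlim.congr' ?_
  filter_upwards [self_mem_nhdsWithin] with y hy
  have hd : dist y x ≠ 0 := dist_ne_zero.2 hy
  simp only [Function.comp_apply]
  field_simp
  ring

lemma nonneg {D : ℝ} {x : X} [(𝓝[≠] x).NeBot] (h : HasConfDerivAt g D x) : 0 ≤ D :=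
  ge_of_tendsto' h.tendsto_dist_div_dist fun _ => by positivity

lemma continuous_deriv [∀ x : X, (𝓝[≠] x).NeBot] {D : X → ℝ}
    (h : ∀ x, HasConfDerivAt g (D x) x) : Continuous D := by
  refine continuous_iff_continuousAt.2 fun x => Metric.tendsto_nhds.2 fun ε hε => ?_
  have hdiag : Tendsto (fun y : X => (y, y)) (𝓝 x) (𝓝 (x, x)) := by
    rw [nhds_prod_eq]
    exact tendsto_id.prodMk tendsto_id
  filter_upwards [hdiag.eventually (IsLittleO.def (h x) (half_pos hε)).eventually_nhds] with y hy
  have hratio : ∀ᶠ z in 𝓝[≠] y, dist (dist (g z) (g y) / dist z y) (D x) ≤ ε / 2 := by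
    have hpair : Tendsto (fun z : X => (z, y)) (𝓝[≠] y) (𝓝 (y, y)) :=
      ((Continuous.prodMk_left y).tendsto y).mono_left nhdsWithin_le_nhds
    filter_upwards [hpair.eventually hy, self_mem_nhdsWithin] with z hz hzy
    have hd : 0 < dist z y := dist_pos.2 hzy
    rw [Real.dist_eq, div_sub' hd.ne', abs_div, abs_of_pos hd, div_le_iff₀ hd, mul_comm (dist z y)]
    simpa using hz
  have hDy : dist (D y) (D x) ≤ ε / 2 :=
    le_of_tendsto ((h y).tendsto_dist_div_dist.dist tendsto_const_nhds) hratio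
  linarith

end HasConfDerivAt

/-! ### Contracting iterates -/

lemma exists_lipschitzOnWith_ball_of_isCompact {X Y : Type*} [PseudoMetricSpace X]
    [PseudoMetricSpace Y] {g : X → Y} {J : Set X} (hJ : IsCompact J) {K : ℝ≥0}
    (hg : ∀ x ∈ J, ∀ᶠ p : X × X in 𝓝 (x, x), dist (g p.1) (g p.2) ≤ K * dist p.1 p.2) :
    ∃ δ > 0, ∀ x ∈ J, LipschitzOnWith K g (ball x δ) := by
  have hdiag : IsCompact ((fun x : X => (x, x)) '' J) := hJ.image (by fun_prop)
  have hnhds : {p : X × X | dist (g p.1) (g p.2) ≤ K * dist p.1 p.2} ∈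
      𝓝ˢ ((fun x : X => (x, x)) '' J) := by
    rw [mem_nhdsSet_iff_forall]
    rintro _ ⟨x, hx, rfl⟩
    exact hg x hx
  obtain ⟨δ, hδ, hsub⟩ := (hasBasis_nhdsSet_thickening hdiag).mem_iff.1 hnhds
  refine ⟨δ, hδ, fun x hx => .of_dist_le_mul fun a ha b hb => @hsub (a, b) ?_⟩
  exact mem_thickening_iff.2 ⟨(x, x), mem_image_of_mem _ hx, max_lt ha hb⟩

lemma lipschitzOnWith_one_iterate_ball {X : Type*} [PseudoMetricSpace X] {g : X → X} {x : X}
    {δ : ℝ} (hδ : 0 < δ) (hg : ∀ k, LipschitzOnWith 1 g (ball (g^[k] x) δ)) (k : ℕ) :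
    LipschitzOnWith 1 g^[k] (ball x δ) := by
  induction k with
  | zero => exact LipschitzWith.id.lipschitzOnWith
  | succ k ih =>
    have hmaps : MapsTo g^[k] (ball x δ) (ball (g^[k] x) δ) := fun y hy => by
      simpa using (ih.dist_le_mul y hy x (mem_ball_self hδ)).trans_lt (by simpa using hy)
    rw [Function.iterate_succ']
    simpa using (hg k).comp ih hmaps

lemma equicontinuousOn_of_iterate_iterate {X : Type*} [UniformSpace X] {f : X → X} {U : Set X}
    {N : ℕ} (hf : UniformContinuous f) (hN : 0 < N)
    (h : EquicontinuousOn (fun k : ℕ => (f^[N])^[k]) U) :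
    EquicontinuousOn (fun n : ℕ => f^[n]) U := by
  intro x hx V hV
  have hW : ⋂ j ∈ Finset.range N, {p : X × X | (f^[j] p.1, f^[j] p.2) ∈ V} ∈ uniformity X :=
    (biInter_finset_mem _).2 fun j _ => hf.iterate f j hV
  filter_upwards [h x hx _ hW] with y hy n
  have hn : f^[n] = f^[n % N] ∘ (f^[N])^[n / N] := by
    rw [← Function.iterate_mul, ← Function.iterate_add, Nat.mod_add_div]
  simp only [mem_iInter] at hy
  simpa [hn] using hy (n / N) (n % N) (Finset.mem_range.2 (Nat.mod_lt n hN))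

lemma exists_equicontinuousOn_of_hasConfDerivAt_lt_one {X : Type*} [PseudoMetricSpace X]
    {f : X → X} (hf : UniformContinuous f) {J : Set X} (hJc : IsCompact J) (hJ : MapsTo f J J)
    {N : ℕ} (hN : 0 < N) (hlt : ∀ x ∈ J, ∃ D < 1, HasConfDerivAt f^[N] D x) {x : X} (hx : x ∈ J) :
    ∃ U : Set X, IsOpen U ∧ x ∈ U ∧ EquicontinuousOn (fun n : ℕ => f^[n]) U := by
  obtain ⟨δ, hδ, hlip⟩ : ∃ δ > 0, ∀ y ∈ J, LipschitzOnWith 1 f^[N] (ball y δ) := by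
    refine exists_lipschitzOnWith_ball_of_isCompact hJc fun y hy => ?_
    obtain ⟨D, hD, hconf⟩ := hlt y hy
    exact hconf.eventually_dist_le hD
  have hiter : ∀ k, LipschitzOnWith 1 (f^[N])^[k] (ball x δ) :=
    lipschitzOnWith_one_iterate_ball hδ fun k => hlip _ ((hJ.iterate N).iterate k hx)
  exact ⟨ball x δ, isOpen_ball, mem_ball_self hδ, equicontinuousOn_of_iterate_iterate hf hN
    (LipschitzOnWith.uniformEquicontinuousOn _ 1 hiter).equicontinuousOn⟩

/-! ### Empirical measures -/

section EmpiricalMeasure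

variable {X : Type*} [MeasurableSpace X]

/-- The uniform distribution on the orbit piece `x, f x, …, f^[n - 1] x`, whose integrals are the
Birkhoff averages. It is the zero measure for `n = 0`. -/
noncomputable def empiricalMeasure (f : X → X) (n : ℕ) (x : X) : Measure X :=
  (n : ℝ≥0∞)⁻¹ • ∑ i ∈ Finset.range n, Measure.dirac (f^[i] x)

lemma isProbabilityMeasure_empiricalMeasure (f : X → X) {n : ℕ} (hn : n ≠ 0) (x : X) :
    IsProbabilityMeasure (empiricalMeasure f n x) := by
  constructor
  simp [empiricalMeasure, ENNReal.inv_mul_cancel (Nat.cast_ne_zero.2 hn)]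

lemma empiricalMeasure_apply_of_mapsTo {f : X → X} {J : Set X} (hJm : MeasurableSet J)
    (hJ : MapsTo f J J) (n : ℕ) {x : X} (hx : x ∈ J) : empiricalMeasure f n x Jᶜ = 0 := by
  simp only [empiricalMeasure, Measure.smul_apply, Measure.finsetSum_apply, smul_eq_mul]
  rw [Finset.sum_eq_zero, mul_zero]
  intro i _
  rw [Measure.dirac_apply' _ hJm.compl]
  simpa using hJ.iterate i hx

lemma integral_empiricalMeasure [MeasurableSingletonClass X] {E : Type*} [NormedAddCommGroup E]
    [NormedSpace ℝ E] [CompleteSpace E] (f : X → X) (n : ℕ) (x : X) (g : X → E) :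
    ∫ y, g y ∂(empiricalMeasure f n x) = birkhoffAverage ℝ f g n x := by
  rw [empiricalMeasure, integral_smul_measure, integral_finsetSum_measure]
  · simp [birkhoffAverage, birkhoffSum]
  · exact fun i _ => integrable_dirac (by simp)

end EmpiricalMeasure

lemma measurePreserving_of_tendsto_birkhoffAverage {X ι : Type*} [TopologicalSpace X]
    [MeasurableSpace X] [BorelSpace X] [HasOuterApproxClosed X] {f : X → X} (hf : Continuous f)
    {L : Filter ι} [L.NeBot] {n : ι → ℕ} (hn : Tendsto n L atTop) {x : ι → X} {μ : Measure X}
    [IsFiniteMeasure μ]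
    (h : ∀ g : BoundedContinuousFunction X ℝ,
      Tendsto (fun k => birkhoffAverage ℝ f g (n k) (x k)) L (𝓝 (∫ y, g y ∂μ))) :
    MeasurePreserving f μ μ := by
  refine ⟨hf.measurable, ?_⟩
  refine ext_of_forall_integral_eq_of_IsFiniteMeasure fun g => ?_
  rw [integral_map hf.aemeasurable g.continuous.aestronglyMeasurable]
  have hshift : Tendsto (fun k => birkhoffAverage ℝ f g (n k) (f (x k))) L
      (𝓝 (∫ y, g (f y) ∂μ)) := by
    refine (h (g.compContinuous ⟨f, hf⟩)).congr fun k => ?_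
    simp only [birkhoffAverage, birkhoffSum, BoundedContinuousFunction.compContinuous_apply,
      ContinuousMap.coe_mk, ← Function.iterate_succ_apply', Function.iterate_succ_apply]
  have hinv : Tendsto (fun k => dist (birkhoffAverage ℝ f g (n k) (f (x k)))
      (birkhoffAverage ℝ f g (n k) (x k))) L (𝓝 0) := by
    have hbound : Tendsto (fun k => 2 * ‖g‖ / n k) L (𝓝 0) :=
      (tendsto_natCast_atTop_atTop.comp hn).const_div_atTop _
    refine squeeze_zero (fun _ => dist_nonneg) (fun k => ?_) hbound
    rw [dist_birkhoffAverage_apply_birkhoffAverage]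
    gcongr
    exact g.dist_le_two_norm _ _
  exact dist_eq_zero.1 (tendsto_nhds_unique (hshift.dist (h g)) hinv)

lemma exists_measurePreserving_forall_le_integral {X ι : Type*} [TopologicalSpace X]
    [CompactSpace X] [T2Space X] [HasOuterApproxClosed X] [MeasurableSpace X] [BorelSpace X]
    {f : X → X} (hf : Continuous f) {J : Set X} (hJc : IsClosed J) (hJ : MapsTo f J J)
    {φ : ι → X → ℝ} (hφ : ∀ i, Continuous (φ i)) {c : ι → ℝ}
    (h : ∃ᶠ n in atTop, ∃ x ∈ J, ∀ i, c i ≤ birkhoffAverage ℝ f (φ i) n x) :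
    ∃ μ : Measure X, IsProbabilityMeasure μ ∧ MeasurePreserving f μ μ ∧ μ Jᶜ = 0 ∧
      ∀ i, c i ≤ ∫ y, φ i y ∂μ := by
  obtain ⟨n, hn, hn'⟩ := extraction_of_frequently_atTop (h.and_eventually (eventually_ne_atTop 0))
  choose x hx hc using fun k => (hn' k).1
  let P : ℕ → ProbabilityMeasure X := fun k =>
    ⟨empiricalMeasure f (n k) (x k), isProbabilityMeasure_empiricalMeasure f (hn' k).2 (x k)⟩
  let L : Ultrafilter ℕ := Ultrafilter.of atTop
  obtain ⟨μ, -, hμ⟩ := isCompact_univ.ultrafilter_le_nhds (L.map P) (by simp)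
  have hlim : ∀ g : BoundedContinuousFunction X ℝ,
      Tendsto (fun k => birkhoffAverage ℝ f g (n k) (x k)) L (𝓝 (∫ y, g y ∂(μ : Measure X))) :=
    fun g => (ProbabilityMeasure.tendsto_iff_forall_integral_tendsto.1 hμ g).congr fun k =>
      integral_empiricalMeasure f (n k) (x k) g
  refine ⟨μ, inferInstance, measurePreserving_of_tendsto_birkhoffAverage hf
    (hn.tendsto_atTop.mono_left (Ultrafilter.of_le atTop)) hlim, ?_, fun i => ?_⟩
  · have hle : (μ : Measure X) Jᶜ ≤ (L : Filter ℕ).liminf fun k => (P k : Measure X) Jᶜ :=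
      ProbabilityMeasure.le_liminf_measure_open_of_tendsto hμ hJc.isOpen_compl
    have hP : ∀ k, (P k : Measure X) Jᶜ = 0 := fun k =>
      empiricalMeasure_apply_of_mapsTo hJc.measurableSet hJ (n k) (hx k)
    simpa [hP] using hle
  · exact ge_of_tendsto' (hlim (.mkOfCompact ⟨φ i, hφ i⟩)) fun k => hc k i

/-! ### Monotone limits of integrals bounded below -/

section MonotoneLimit

variable {α : Type*} {_ : MeasurableSpace α} {μ : Measure α} {φ : ℕ → α → ℝ} {c : ℝ}

lemma lintegral_iSup_ofReal_sub_lt_top (hφ : ∀ n, Integrable (φ n) μ)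
    (hanti : ∀ᵐ x ∂μ, Antitone fun n => φ n x) (hc : ∀ n, c ≤ ∫ x, φ n x ∂μ) :
    ∫⁻ x, ⨆ n, ENNReal.ofReal (φ 0 x - φ n x) ∂μ < ∞ := by
  have hmono : ∀ᵐ x ∂μ, Monotone fun n => ENNReal.ofReal (φ 0 x - φ n x) := by
    filter_upwards [hanti] with x hx m n hmn
    exact ENNReal.ofReal_le_ofReal (sub_le_sub_left (hx hmn) _)
  have hmeas : ∀ n, AEMeasurable (fun x => ENNReal.ofReal (φ 0 x - φ n x)) μ := fun n =>
    ((hφ 0).sub (hφ n)).aemeasurable.ennreal_ofReal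
  rw [lintegral_iSup' hmeas hmono]
  refine (iSup_le fun n => ?_).trans_lt (ENNReal.ofReal_lt_top (r := ∫ x, φ 0 x ∂μ - c))
  have hnonneg : 0 ≤ᵐ[μ] fun x => φ 0 x - φ n x := by
    filter_upwards [hanti] with x hx
    exact sub_nonneg.2 (hx n.zero_le)
  have hint : Integrable (fun x => φ 0 x - φ n x) μ := (hφ 0).sub (hφ n)
  rw [← ofReal_integral_eq_lintegral_ofReal hint hnonneg,
    integral_sub (hφ 0) (hφ n)]
  exact ENNReal.ofReal_le_ofReal (sub_le_sub_left (hc n) _)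

lemma ae_bddBelow_range_of_antitone (hφ : ∀ n, Integrable (φ n) μ)
    (hanti : ∀ᵐ x ∂μ, Antitone fun n => φ n x) (hc : ∀ n, c ≤ ∫ x, φ n x ∂μ) :
    ∀ᵐ x ∂μ, BddBelow (range fun n => φ n x) := by
  have hmeas : AEMeasurable (fun x => ⨆ n, ENNReal.ofReal (φ 0 x - φ n x)) μ :=
    .iSup fun n => ((hφ 0).sub (hφ n)).aemeasurable.ennreal_ofReal
  filter_upwards [ae_lt_top' hmeas (lintegral_iSup_ofReal_sub_lt_top hφ hanti hc).ne] with x hx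
  refine ⟨φ 0 x - (⨆ n, ENNReal.ofReal (φ 0 x - φ n x)).toReal, ?_⟩
  rintro _ ⟨n, rfl⟩
  have hle := le_iSup (fun n => ENNReal.ofReal (φ 0 x - φ n x)) n
  linarith [(ENNReal.ofReal_le_iff_le_toReal hx.ne).1 hle]

lemma integrable_of_tendsto_antitone {F : α → ℝ} (hφ : ∀ n, Integrable (φ n) μ)
    (hanti : ∀ᵐ x ∂μ, Antitone fun n => φ n x) (hc : ∀ n, c ≤ ∫ x, φ n x ∂μ)
    (hlim : ∀ᵐ x ∂μ, Tendsto (fun n => φ n x) atTop (𝓝 (F x))) : Integrable F μ := by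
  have hF : AEStronglyMeasurable F μ :=
    aestronglyMeasurable_of_tendsto_ae _ (fun n => (hφ n).aestronglyMeasurable) hlim
  have hdiff : Integrable (fun x => φ 0 x - F x) μ := by
    refine ⟨(hφ 0).aestronglyMeasurable.sub hF, ?_⟩
    have hnonneg : 0 ≤ᵐ[μ] fun x => φ 0 x - F x := by
      filter_upwards [hanti, hlim] with x hx hxlim
      exact sub_nonneg.2 (hx.le_of_tendsto hxlim 0)
    rw [hasFiniteIntegral_iff_ofReal hnonneg]
    refine (lintegral_mono_ae ?_).trans_lt (lintegral_iSup_ofReal_sub_lt_top hφ hanti hc)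
    filter_upwards [hlim] with x hx
    exact le_of_tendsto' (ENNReal.tendsto_ofReal (hx.const_sub (φ 0 x))) fun n =>
      le_iSup (fun n => ENNReal.ofReal (φ 0 x - φ n x)) n
  exact ((hφ 0).sub hdiff).congr (.of_forall fun x => sub_sub_cancel (φ 0 x) (F x))

lemma le_integral_of_tendsto_antitone {F : α → ℝ} (hφ : ∀ n, Integrable (φ n) μ)
    (hanti : ∀ᵐ x ∂μ, Antitone fun n => φ n x) (hc : ∀ n, c ≤ ∫ x, φ n x ∂μ)
    (hlim : ∀ᵐ x ∂μ, Tendsto (fun n => φ n x) atTop (𝓝 (F x))) : c ≤ ∫ x, F x ∂μ :=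
  ge_of_tendsto' (integral_tendsto_of_tendsto_of_antitone hφ
    (integrable_of_tendsto_antitone hφ hanti hc hlim) hanti hlim) hc

end MonotoneLimit

/-! ### Growth of products along orbits -/

/-- The truncation `max (log t) (-M)` of the logarithm, continuous in `t` and decreasing to `log t`
as `M → ∞`. The maximum is taken inside the logarithm because `Real.log 0 = 0`, so that at `t = 0`
the truncation has the value `-M` that `log 0 = -∞` calls for. -/
noncomputable def truncLog (M : ℕ) (t : ℝ) : ℝ :=
  Real.log (max t (Real.exp (-M)))

lemma continuous_truncLog (M : ℕ) : Continuous (truncLog M) :=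
  (continuous_id.max continuous_const).log fun _ => (lt_max_of_lt_right (Real.exp_pos _)).ne'

lemma antitone_truncLog (t : ℝ) : Antitone fun M => truncLog M t := fun M N hMN =>
  Real.log_le_log (lt_max_of_lt_right (Real.exp_pos _)) (by gcongr)

@[simp]
lemma truncLog_zero (M : ℕ) : truncLog M 0 = -M := by
  rw [truncLog, max_eq_right (Real.exp_pos _).le, Real.log_exp]

lemma tendsto_truncLog {t : ℝ} (ht : 0 < t) :
    Tendsto (fun M => truncLog M t) atTop (𝓝 (Real.log t)) := by
  refine tendsto_const_nhds.congr' ?_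
  filter_upwards [eventually_ge_atTop ⌈-Real.log t⌉₊] with M hM
  have hexp : Real.exp (-M) ≤ t := by
    rw [← Real.le_log_iff_exp_le ht]
    linarith [Nat.ceil_le.1 hM]
  rw [truncLog, max_eq_left hexp]

lemma le_birkhoffAverage_truncLog {X : Type*} {f : X → X} {D : X → ℝ} (hD : ∀ x, 0 ≤ D x)
    {c : ℝ} {n : ℕ} (hn : n ≠ 0) {x : X}
    (h : Real.exp (c * n) ≤ ∏ i ∈ Finset.range n, D (f^[i] x)) (M : ℕ) :
    c ≤ birkhoffAverage ℝ f (fun y => truncLog M (D y)) n x := by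
  have hpos : ∀ i, 0 < max (D (f^[i] x)) (Real.exp (-M)) := fun i =>
    lt_max_of_lt_right (Real.exp_pos _)
  have hn' : (0 : ℝ) < n := Nat.cast_pos.2 hn.bot_lt
  have hsum : c * n ≤ ∑ i ∈ Finset.range n, truncLog M (D (f^[i] x)) := by
    unfold truncLog
    rw [← Real.log_prod fun i _ => (hpos i).ne',
      Real.le_log_iff_exp_le (Finset.prod_pos fun i _ => hpos i)]
    exact h.trans (Finset.prod_le_prod (fun _ _ => hD _) fun _ _ => le_max_left _ _)
  rwa [birkhoffAverage, birkhoffSum, smul_eq_mul, inv_mul_eq_div, le_div_iff₀ hn']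

lemma exists_measurePreserving_le_integral_log {X : Type*} [TopologicalSpace X] [CompactSpace X]
    [T2Space X] [HasOuterApproxClosed X] [MeasurableSpace X] [BorelSpace X] {f : X → X}
    (hf : Continuous f) {J : Set X} (hJc : IsClosed J) (hJ : MapsTo f J J) {D : X → ℝ}
    (hD : Continuous D) (hD0 : ∀ x, 0 ≤ D x) {c : ℝ}
    (h : ∃ᶠ n : ℕ in atTop, ∃ x ∈ J, Real.exp (c * n) ≤ ∏ i ∈ Finset.range n, D (f^[i] x)) :
    ∃ μ : Measure X, IsProbabilityMeasure μ ∧ MeasurePreserving f μ μ ∧ μ Jᶜ = 0 ∧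
      c ≤ ∫ x, Real.log (D x) ∂μ := by
  have hcont : ∀ M, Continuous fun y => truncLog M (D y) := fun M =>
    (continuous_truncLog M).comp hD
  have hfreq : ∃ᶠ n in atTop, ∃ x ∈ J, ∀ M,
      c ≤ birkhoffAverage ℝ f (fun y => truncLog M (D y)) n x :=
    (h.and_eventually (eventually_ne_atTop 0)).mono fun n ⟨⟨x, hx, hexp⟩, hn⟩ =>
      ⟨x, hx, le_birkhoffAverage_truncLog hD0 hn hexp⟩
  obtain ⟨μ, hμ, hinv, hμJ, hc⟩ :=
    exists_measurePreserving_forall_le_integral hf hJc hJ hcont hfreq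
  refine ⟨μ, hμ, hinv, hμJ, ?_⟩
  have hint : ∀ M, Integrable (fun y => truncLog M (D y)) μ := fun M =>
    (BoundedContinuousFunction.mkOfCompact ⟨_, hcont M⟩).integrable μ
  have hanti : ∀ᵐ y ∂μ, Antitone fun M => truncLog M (D y) :=
    .of_forall fun y => antitone_truncLog (D y)
  have hpos : ∀ᵐ y ∂μ, 0 < D y := by
    filter_upwards [ae_bddBelow_range_of_antitone hint hanti hc] with y ⟨b, hb⟩
    refine (hD0 y).lt_of_ne' fun hy => ?_
    obtain ⟨M, hM⟩ := exists_nat_gt (-b)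
    have hbM : b ≤ truncLog M (D y) := hb ⟨M, rfl⟩
    rw [hy, truncLog_zero] at hbM
    linarith
  exact le_integral_of_tendsto_antitone hint hanti hc (hpos.mono fun y hy => tendsto_truncLog hy)

/-! ### Geometry of the chordal metric -/

namespace RSphere

lemma eq_infty_or_exists_ofC (x : RSphere) : x = infty ∨ ∃ z, x = ofC z := by
  obtain ⟨_ | z⟩ := x
  · exact Or.inl rfl
  · exact Or.inr ⟨z, rfl⟩

lemma ofC_ne_infty (z : ℂ) : ofC z ≠ infty := by simp [ofC, infty]

@[simp] lemma toC_ofC (z : ℂ) : toC (ofC z) = z := rfl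

@[simp] lemma toC_infty : toC infty = 0 := rfl

lemma ofC_injective : Function.Injective ofC := Function.LeftInverse.injective toC_ofC

lemma ofC_toC {x : RSphere} (hx : x ≠ infty) : ofC (toC x) = x := by
  obtain rfl | ⟨z, rfl⟩ := x.eq_infty_or_exists_ofC
  · exact absurd rfl hx
  · rfl

@[simp] lemma inv_infty : inv infty = ofC 0 := rfl

@[simp] lemma inv_ofC_zero : inv (ofC 0) = infty := by simp [inv, elim, ofC]

lemma inv_ofC {z : ℂ} (hz : z ≠ 0) : inv (ofC z) = ofC z⁻¹ := by simp [inv, elim, ofC, hz]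

@[simp] lemma embed_infty_fst : (embed infty).fst = 0 := rfl

@[simp] lemma embed_infty_snd : (embed infty).snd = 1 := rfl

lemma embed_ofC_fst (z : ℂ) : (embed (ofC z)).fst = ((2 / (‖z‖ ^ 2 + 1)) : ℝ) • z := rfl

lemma embed_ofC_snd (z : ℂ) : (embed (ofC z)).snd = (‖z‖ ^ 2 - 1) / (‖z‖ ^ 2 + 1) := rfl

lemma one_sub_embed_ofC_snd (z : ℂ) : 1 - (embed (ofC z)).snd = 2 / (‖z‖ ^ 2 + 1) := by
  rw [embed_ofC_snd]
  field_simp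
  ring

lemma isometry_embed : Isometry embed := Isometry.of_dist_eq fun _ _ => rfl

lemma dist_sq_eq (x y : RSphere) : dist x y ^ 2 =
    dist (embed x).fst (embed y).fst ^ 2 + dist (embed x).snd (embed y).snd ^ 2 := by
  rw [← isometry_embed.dist_eq, WithLp.prod_dist_eq_of_L2, Real.sq_sqrt (by positivity)]

/-- The ratio of chordal to Euclidean distance of two points of `ℂ`; on the diagonal it is the
density `2 / (‖z‖ ^ 2 + 1)` of the spherical metric. -/
noncomputable def chartFactor (z w : ℂ) : ℝ := 2 / (√(‖z‖ ^ 2 + 1) * √(‖w‖ ^ 2 + 1))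

lemma chartFactor_pos (z w : ℂ) : 0 < chartFactor z w := by
  unfold chartFactor; positivity

lemma continuous_chartFactor : Continuous fun p : ℂ × ℂ => chartFactor p.1 p.2 := by
  unfold chartFactor
  exact continuous_const.div (by fun_prop) fun p => by positivity

lemma dist_ofC_ofC (z w : ℂ) : dist (ofC z) (ofC w) = chartFactor z w * dist z w := by
  have hk := (chartFactor_pos z w).le
  rw [← sq_eq_sq₀ dist_nonneg (by positivity), dist_sq_eq, embed_ofC_fst, embed_ofC_snd,
    embed_ofC_fst, embed_ofC_snd, chartFactor,
    mul_pow, div_pow, mul_pow, Real.sq_sqrt (by positivity), Real.sq_sqrt (by positivity)]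
  have hnorm : ∀ v : ℂ, ‖v‖ ^ 2 = v.re ^ 2 + v.im ^ 2 := fun v => by
    rw [Complex.sq_norm, Complex.normSq_apply]
    ring
  have hz : z.re ^ 2 + z.im ^ 2 + 1 ≠ 0 := by positivity
  have hw : w.re ^ 2 + w.im ^ 2 + 1 ≠ 0 := by positivity
  simp only [dist_eq_norm, Real.norm_eq_abs, sq_abs, hnorm, Complex.sub_re, Complex.sub_im,
    Complex.real_smul, Complex.mul_re, Complex.mul_im, Complex.ofReal_re, Complex.ofReal_im,
    zero_mul, sub_zero, add_zero]
  field_simp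
  ring

lemma hasConfDerivAt_ofC (z : ℂ) : HasConfDerivAt ofC (chartFactor z z) z :=
  .of_dist_eq_mul (K := fun p => chartFactor p.1 p.2) continuous_chartFactor.continuousAt
    (.of_forall fun p => dist_ofC_ofC p.1 p.2)

lemma continuous_ofC : Continuous ofC :=
  continuous_iff_continuousAt.2 fun z => (hasConfDerivAt_ofC z).continuousAt

lemma toC_eq_smul (x : RSphere) : toC x = (1 - (embed x).snd)⁻¹ • (embed x).fst := by
  obtain rfl | ⟨z, rfl⟩ := x.eq_infty_or_exists_ofC
  · simp
  · rw [toC_ofC, one_sub_embed_ofC_snd, embed_ofC_fst, smul_smul,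
      inv_mul_cancel₀ (by positivity), one_smul]

lemma continuousAt_toC (z : ℂ) : ContinuousAt toC (ofC z) := by
  have hfst : Continuous fun x => (embed x).fst :=
    (WithLp.continuous_fst _ _ _).comp isometry_embed.continuous
  have hsnd : Continuous fun x => (embed x).snd :=
    (WithLp.continuous_snd _ _ _).comp isometry_embed.continuous
  have hne : 1 - (embed (ofC z)).snd ≠ 0 := by
    rw [one_sub_embed_ofC_snd]
    positivity
  rw [funext toC_eq_smul]
  exact ((continuousAt_const.sub hsnd.continuousAt).inv₀ hne).smul hfst.continuousAt

lemma hasConfDerivAt_toC (z : ℂ) : HasConfDerivAt toC (chartFactor z z)⁻¹ (ofC z) := by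
  have htoC : ContinuousAt (fun p : RSphere × RSphere => (toC p.1, toC p.2)) (ofC z, ofC z) :=
    (continuousAt_toC z).prodMap (continuousAt_toC z)
  have hcont : ContinuousAt (fun p : RSphere × RSphere => (chartFactor (toC p.1) (toC p.2))⁻¹)
      (ofC z, ofC z) :=
    (continuous_chartFactor.continuousAt.comp htoC).inv₀ (chartFactor_pos _ _).ne'
  have hne : ∀ᶠ x in 𝓝 (ofC z), x ≠ infty := isOpen_ne.mem_nhds (ofC_ne_infty z)
  refine .of_dist_eq_mul hcont ?_
  filter_upwards [hne.prod_nhds hne] with p hp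
  rw [eq_inv_mul_iff_mul_eq₀ (chartFactor_pos _ _).ne', ← dist_ofC_ofC, ofC_toC hp.1, ofC_toC hp.2]

lemma embed_inv_fst (x : RSphere) : (embed (inv x)).fst = (starRingEnd ℂ) (embed x).fst := by
  obtain rfl | ⟨z, rfl⟩ := x.eq_infty_or_exists_ofC
  · simp [embed_ofC_fst]
  obtain rfl | hz := eq_or_ne z 0
  · simp [embed_ofC_fst]
  have hn : ‖z‖ ≠ 0 := norm_ne_zero_iff.2 hz
  have hconj : (starRingEnd ℂ) z = ((‖z‖ ^ 2 : ℝ) : ℂ) * z⁻¹ := by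
    rw [eq_mul_inv_iff_mul_eq₀ hz, mul_comm, Complex.mul_conj, Complex.normSq_eq_norm_sq]
  rw [inv_ofC hz, embed_ofC_fst, embed_ofC_fst]
  simp only [Complex.real_smul, map_mul, Complex.conj_ofReal, hconj, ← mul_assoc,
    ← Complex.ofReal_mul, norm_inv]
  congr 2
  field_simp
  ring

lemma embed_inv_snd (x : RSphere) : (embed (inv x)).snd = -(embed x).snd := by
  obtain rfl | ⟨z, rfl⟩ := x.eq_infty_or_exists_ofC
  · simp [embed_ofC_snd]
  obtain rfl | hz := eq_or_ne z 0
  · simp [embed_ofC_snd]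
  have hn : ‖z‖ ≠ 0 := norm_ne_zero_iff.2 hz
  rw [inv_ofC hz, embed_ofC_snd, embed_ofC_snd, norm_inv]
  field_simp
  ring

@[simp] lemma inv_inv (x : RSphere) : inv (inv x) = x := by
  rw [← dist_eq_zero, ← sq_eq_zero_iff, dist_sq_eq]
  simp [embed_inv_fst, embed_inv_snd]

lemma isometry_inv : Isometry inv := by
  refine Isometry.of_dist_eq fun x y => ?_
  rw [← sq_eq_sq₀ dist_nonneg dist_nonneg, dist_sq_eq, dist_sq_eq, embed_inv_fst, embed_inv_fst,
    embed_inv_snd, embed_inv_snd, dist_neg_neg]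
  simp only [dist_eq_norm, ← map_sub, RCLike.norm_conj]

instance : CompactSpace RSphere := by
  have hdisc : IsCompact (ofC '' closedBall 0 1) :=
    (isCompact_closedBall 0 1).image continuous_ofC
  refine ⟨(hdisc.union (hdisc.image isometry_inv.continuous)).of_isClosed_subset
    isClosed_univ fun x _ => ?_⟩
  obtain rfl | ⟨z, rfl⟩ := x.eq_infty_or_exists_ofC
  · exact Or.inr ⟨ofC 0, ⟨0, by simp, rfl⟩, inv_ofC_zero⟩
  obtain h | h := le_total ‖z‖ 1
  · exact Or.inl ⟨z, by simpa using h, rfl⟩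
  · have hz : z ≠ 0 := norm_pos_iff.1 (zero_lt_one.trans_le h)
    refine Or.inr ⟨ofC z⁻¹, ⟨z⁻¹, ?_, rfl⟩, ?_⟩
    · simpa using inv_le_one_of_one_le₀ h
    · rw [inv_ofC (inv_ne_zero hz), _root_.inv_inv]

instance neBot_nhdsNE (x : RSphere) : (𝓝[≠] x).NeBot := by
  have hfin (z : ℂ) : (𝓝[≠] ofC z).NeBot := by
    have h : Tendsto ofC (𝓝[≠] z) (𝓝[≠] ofC z) :=
      continuous_ofC.continuousAt.tendsto.inf
        (tendsto_principal_principal.2 fun _ hw => ofC_injective.ne hw)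
    exact h.neBot
  obtain rfl | ⟨z, rfl⟩ := x.eq_infty_or_exists_ofC
  · have h : Tendsto inv (𝓝[≠] ofC 0) (𝓝[≠] inv (ofC 0)) :=
      isometry_inv.continuous.continuousAt.tendsto.inf
        (tendsto_principal_principal.2 fun _ hw => isometry_inv.injective.ne hw)
    rw [inv_ofC_zero] at h
    exact h.neBot
  · exact hfin z

end RSphere

/-! ### Conformality of rational maps -/

open RSphere

lemma confDifferentiableAt_ofC_of_analyticAt {F : RSphere → RSphere} {a : ℂ}
    (hF : ContinuousAt F (ofC a)) (hFa : F (ofC a) ≠ infty)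
    (h : AnalyticAt ℂ (fun z => toC (F (ofC z))) a) : ConfDifferentiableAt F (ofC a) := by
  have hchart : HasConfDerivAt (fun z => ofC (toC (F (ofC z)))) _ a :=
    (hasConfDerivAt_ofC _).comp (.of_hasStrictDerivAt h.hasStrictDerivAt)
  have hconf := HasConfDerivAt.comp (x := ofC a) hchart (hasConfDerivAt_toC a)
  refine ⟨_, hconf.congr ?_⟩
  filter_upwards [isOpen_ne.mem_nhds (ofC_ne_infty a),
    hF.eventually (isOpen_ne.mem_nhds hFa)] with x hx hFx
  simp only [Function.comp_apply, ofC_toC hx, ofC_toC hFx]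

lemma confDifferentiableAt_ofC_of_ne_infty {F : RSphere → RSphere} {a : ℂ}
    (hF : ContinuousAt F (ofC a)) (hFa : F (ofC a) ≠ infty) {g : ℂ → ℂ}
    (hg : ∀ᶠ z in 𝓝[≠] a, DifferentiableAt ℂ g z)
    (hFg : ∀ᶠ z in 𝓝[≠] a, F (ofC z) = ofC (g z)) : ConfDifferentiableAt F (ofC a) := by
  have hcont : ContinuousAt (fun z => toC (F (ofC z))) a := by
    refine ContinuousAt.comp (g := toC) ?_ (hF.comp continuous_ofC.continuousAt)
    simpa only [Function.comp_apply, ofC_toC hFa] using continuousAt_toC (toC (F (ofC a)))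
  have hdiff : ∀ᶠ z in 𝓝[≠] a, DifferentiableAt ℂ (fun z => toC (F (ofC z))) z := by
    filter_upwards [eventually_eventually_nhdsWithin.2 hFg, hg, self_mem_nhdsWithin] with z hz hgz
      hza
    rw [isOpen_compl_singleton.nhdsWithin_eq hza] at hz
    exact hgz.congr_of_eventuallyEq (hz.mono fun w hw => by simp only [hw, toC_ofC])
  exact confDifferentiableAt_ofC_of_analyticAt hF hFa
    (Complex.analyticAt_of_differentiable_on_punctured_nhds_of_continuousAt hdiff hcont)

lemma confDifferentiableAt_ofC {F : RSphere → RSphere} {a : ℂ} (hF : ContinuousAt F (ofC a))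
    {g : ℂ → ℂ} (hg : ∀ᶠ z in 𝓝[≠] a, DifferentiableAt ℂ g z)
    (hFg : ∀ᶠ z in 𝓝[≠] a, F (ofC z) = ofC (g z)) : ConfDifferentiableAt F (ofC a) := by
  by_cases hFa : F (ofC a) = infty
  · have hne : ∀ᶠ z in 𝓝 a, F (ofC z) ≠ ofC 0 :=
      (hF.comp continuous_ofC.continuousAt).eventually
        (isOpen_ne.mem_nhds (by simpa [hFa] using (ofC_ne_infty 0).symm))
    have hg0 : ∀ᶠ z in 𝓝[≠] a, g z ≠ 0 := by
      filter_upwards [nhdsWithin_le_nhds hne, hFg] with z hz hFz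
      intro h0
      exact hz (by rw [hFz, h0])
    have hinv : ConfDifferentiableAt (fun x => RSphere.inv (F x)) (ofC a) := by
      refine confDifferentiableAt_ofC_of_ne_infty (g := fun z => (g z)⁻¹)
        (RSphere.isometry_inv.continuous.continuousAt.comp hF) ?_ ?_ ?_
      · simpa [hFa] using ofC_ne_infty 0
      · filter_upwards [hg, hg0] with z hz hz0 using hz.inv hz0
      · filter_upwards [hFg, hg0] with z hz hz0
        rw [hz, inv_ofC hz0]
    obtain ⟨D, hD⟩ := hinv
    have hcomp := (HasConfDerivAt.of_isometry RSphere.isometry_inv _).comp hD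
    exact ⟨_, hcomp.congr (.of_forall fun x => RSphere.inv_inv (F x))⟩
  · exact confDifferentiableAt_ofC_of_ne_infty hF hFa hg hFg

lemma confDifferentiableAt_infty_of_comp_inv {F : RSphere → RSphere}
    (h : ConfDifferentiableAt (fun x => F (RSphere.inv x)) (ofC 0)) :
    ConfDifferentiableAt F infty := by
  obtain ⟨D, hD⟩ := h
  have hcomp := HasConfDerivAt.comp (x := infty) hD (.of_isometry RSphere.isometry_inv _)
  exact ⟨_, hcomp.congr (.of_forall fun x => congrArg F (RSphere.inv_inv x))⟩

namespace IsRationalMap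

variable {f : RSphere → RSphere} {p q : Polynomial ℂ}

lemma denom_ne_zero (hf : IsRationalMap f p q) (hdeg : 2 ≤ ratDeg p q) : q ≠ 0 := by
  rintro rfl
  have hp := Polynomial.natDegree_eq_zero_of_isUnit (isCoprime_zero_right.1 hf.coprime)
  simp [ratDeg, hp] at hdeg

lemma confDifferentiable (hf : IsRationalMap f p q) (hq : q ≠ 0) : ConfDifferentiable f := by
  intro x
  have hcofinite : ∀ᶠ z in cofinite, q.eval z ≠ 0 := by
    simpa [eventually_cofinite] using Polynomial.finite_setOfPred_isRoot hq
  have hdiff : ∀ {z}, q.eval z ≠ 0 → DifferentiableAt ℂ (fun w => p.eval w / q.eval w) z :=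
    fun hz => p.differentiableAt.div q.differentiableAt hz
  obtain rfl | ⟨a, rfl⟩ := x.eq_infty_or_exists_ofC
  · have hq0 : ∀ᶠ z in 𝓝[≠] (0 : ℂ), q.eval z⁻¹ ≠ 0 :=
      tendsto_inv₀_nhdsNE_zero.eventually (hcofinite.filter_mono (Bornology.le_cofinite ℂ))
    refine confDifferentiableAt_infty_of_comp_inv (confDifferentiableAt_ofC
      (hf.continuous.comp RSphere.isometry_inv.continuous).continuousAt
      (g := fun z => p.eval z⁻¹ / q.eval z⁻¹) ?_ ?_)
    · filter_upwards [hq0, self_mem_nhdsWithin] with z hz hz0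
      exact (hdiff hz).comp z (differentiableAt_inv hz0)
    · filter_upwards [hq0, self_mem_nhdsWithin] with z hz hz0
      rw [inv_ofC hz0, hf.eval _ hz]
  · have hqa : ∀ᶠ z in 𝓝[≠] a, q.eval z ≠ 0 := hcofinite.filter_mono (nhdsNE_le_cofinite a)
    exact confDifferentiableAt_ofC hf.continuous.continuousAt (hqa.mono fun z hz => hdiff hz)
      (hqa.mono hf.eval)

end IsRationalMap

/-! ### Spherical derivatives and the Julia set -/

lemma HasConfDerivAt.sphDeriv_eq {f : RSphere → RSphere} {D : ℝ} {x : RSphere}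
    (h : HasConfDerivAt f D x) : sphDeriv f x = D :=
  h.tendsto_dist_div_dist.limsup_eq

lemma ConfDifferentiableAt.hasConfDerivAt_sphDeriv {f : RSphere → RSphere} {x : RSphere}
    (h : ConfDifferentiableAt f x) : HasConfDerivAt f (sphDeriv f x) x := by
  obtain ⟨D, hD⟩ := h
  rwa [hD.sphDeriv_eq]

lemma isClosed_juliaSet (f : RSphere → RSphere) : IsClosed (juliaSet f) := by
  refine isClosed_compl_iff.2 (isOpen_iff_forall_mem_open.2 ?_)
  rintro x ⟨U, hU, hxU, hequi⟩
  exact ⟨U, fun y hy => ⟨U, hU, hy, hequi⟩, hU, hxU⟩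

lemma mapsTo_juliaSet {f : RSphere → RSphere} (hf : Continuous f) :
    MapsTo f (juliaSet f) (juliaSet f) := by
  rintro x hx ⟨U, hU, hxU, hequi⟩
  refine hx ⟨f ⁻¹' U, hU.preimage hf, hxU, fun y hy V hV => ?_⟩
  have hf' : Tendsto f (𝓝[f ⁻¹' U] y) (𝓝[U] (f y)) :=
    hf.continuousWithinAt.tendsto_nhdsWithin (mapsTo_preimage f U)
  filter_upwards [nhdsWithin_le_nhds (mem_nhds_left y hV),
    hf'.eventually (hequi (f y) hy V hV)] with z hz hfz n
  cases n with
  | zero => exact hz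
  | succ n => exact hfz n

namespace ConfDifferentiable

variable {f : RSphere → RSphere}

lemma continuous (hf : ConfDifferentiable f) : Continuous f :=
  continuous_iff_continuousAt.2 fun x => (hf x).hasConfDerivAt_sphDeriv.continuousAt

lemma sphDeriv_nonneg (hf : ConfDifferentiable f) (x : RSphere) : 0 ≤ sphDeriv f x :=
  (hf x).hasConfDerivAt_sphDeriv.nonneg

lemma continuous_sphDeriv (hf : ConfDifferentiable f) : Continuous (sphDeriv f) :=
  HasConfDerivAt.continuous_deriv fun x => (hf x).hasConfDerivAt_sphDeriv

lemma iterate (hf : ConfDifferentiable f) (n : ℕ) : ConfDifferentiable f^[n] :=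
  fun x => ⟨_, HasConfDerivAt.iterate (fun y => (hf y).hasConfDerivAt_sphDeriv) n x⟩

lemma sphDeriv_iterate (hf : ConfDifferentiable f) (n : ℕ) (x : RSphere) :
    sphDeriv f^[n] x = ∏ i ∈ Finset.range n, sphDeriv f (f^[i] x) :=
  (HasConfDerivAt.iterate (fun y => (hf y).hasConfDerivAt_sphDeriv) n x).sphDeriv_eq

lemma log_sphDeriv_iterate_div (hf : ConfDifferentiable f) {x : RSphere}
    (hx : ∀ i, sphDeriv f (f^[i] x) ≠ 0) (n : ℕ) :
    Real.log (sphDeriv f^[n] x) / n =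
      birkhoffAverage ℝ f (fun y => Real.log (sphDeriv f y)) n x := by
  rw [hf.sphDeriv_iterate, Real.log_prod fun i _ => hx i, birkhoffAverage, birkhoffSum,
    smul_eq_mul, inv_mul_eq_div]

end ConfDifferentiable

/-! ### The maximal exponent -/

lemma integral_le_of_forall_le {α : Type*} {_ : MeasurableSpace α} {μ : Measure α}
    [IsProbabilityMeasure μ] {g : α → ℝ} {K : ℝ} (hK : 0 ≤ K) (hg : ∀ x, g x ≤ K) :
    ∫ x, g x ∂μ ≤ K := by
  by_cases hint : Integrable g μ
  · simpa using integral_mono hint (integrable_const K) hg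
  · rwa [integral_undef hint]

lemma exp_mul_le_of_lt_log_div {c d t : ℝ} (hc : 0 < c) (hd : 0 ≤ d) (ht : 0 ≤ t)
    (h : c < Real.log d / t) : Real.exp (c * t) ≤ d := by
  have ht' : 0 < t := ht.lt_of_ne' (by rintro rfl; simp [hc.not_gt] at h)
  have hd' : 0 < d := hd.lt_of_ne' (by rintro rfl; simp [hc.not_gt] at h)
  exact (Real.le_log_iff_exp_le hd').1 ((lt_div_iff₀ ht').1 h).le

namespace ConfDifferentiable

variable {f : RSphere → RSphere}

lemma lyapMeas_le_of_forall_sphDeriv_le (hf : ConfDifferentiable f) {C : ℝ}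
    (hC : ∀ x, sphDeriv f x ≤ C) (μ : Measure RSphere) [IsProbabilityMeasure μ] :
    lyapMeas f μ ≤ C :=
  integral_le_of_forall_le ((hf.sphDeriv_nonneg RSphere.infty).trans (hC _)) fun x =>
    (Real.log_le_self (hf.sphDeriv_nonneg x)).trans (hC x)

lemma le_alphaPlusMeas (hf : ConfDifferentiable f) {c : ℝ}
    (h : ∃ᶠ n : ℕ in atTop, ∃ x ∈ juliaSet f, Real.exp (c * n) ≤ sphDeriv f^[n] x) :
    c ≤ alphaPlusMeas f := by
  simp only [hf.sphDeriv_iterate] at h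
  obtain ⟨μ, hμ, hinv, hμJ, hc⟩ := exists_measurePreserving_le_integral_log hf.continuous
    (isClosed_juliaSet f) (mapsTo_juliaSet hf.continuous) hf.continuous_sphDeriv hf.sphDeriv_nonneg
    h
  obtain ⟨C, hC⟩ := (isCompact_range hf.continuous_sphDeriv).bddAbove
  refine hc.trans (le_csSup ⟨C, ?_⟩ ⟨μ, hμ, hinv, hμJ, rfl⟩)
  rintro _ ⟨ν, hν, -, -, rfl⟩
  exact hf.lyapMeas_le_of_forall_sphDeriv_le (fun x => hC (mem_range_self x)) ν

lemma alphaPlusMeas_nonneg (hf : ConfDifferentiable f) (hJ : (juliaSet f).Nonempty) :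
    0 ≤ alphaPlusMeas f := by
  refine hf.le_alphaPlusMeas (frequently_atTop.2 fun N => ?_)
  by_contra! hlt
  obtain ⟨x, hx⟩ := hJ
  refine hx (exists_equicontinuousOn_of_hasConfDerivAt_lt_one (N := N + 1)
    (CompactSpace.uniformContinuous_of_continuous hf.continuous) (isClosed_juliaSet f).isCompact
    (mapsTo_juliaSet hf.continuous) N.succ_pos (fun y hy => ⟨sphDeriv f^[N + 1] y, ?_, ?_⟩) hx)
  · simpa using hlt (N + 1) N.le_succ y hy
  · exact (hf.iterate (N + 1) y).hasConfDerivAt_sphDeriv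

lemma lyapUpper_le_alphaPlusMeas (hf : ConfDifferentiable f) {x : RSphere} (hx : x ∈ juliaSet f) :
    lyapUpper f x ≤ alphaPlusMeas f := by
  refine EReal.ge_of_forall_gt_iff_ge.1 fun c hc => EReal.coe_le_coe_iff.2 ?_
  obtain hc0 | hc0 := le_or_gt c 0
  · exact hc0.trans (hf.alphaPlusMeas_nonneg ⟨x, hx⟩)
  have hfreq := frequently_lt_of_lt_limsup (by isBoundedDefault) hc
  refine hf.le_alphaPlusMeas (hfreq.mono fun n hn => ⟨x, hx, ?_⟩)
  exact exp_mul_le_of_lt_log_div hc0 ((hf.iterate n).sphDeriv_nonneg x)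
    n.cast_nonneg (EReal.coe_lt_coe_iff.1 hn)

end ConfDifferentiable

/-! ### The minimal exponent -/

lemma ConfDifferentiable.exists_continuousMap_eqOn_log_sphDeriv {f : RSphere → RSphere}
    (hf : ConfDifferentiable f) (hcrit : juliaSet f ∩ critSet f = ∅) :
    ∃ φ : C(RSphere, ℝ), EqOn φ (fun x => Real.log (sphDeriv f x)) (juliaSet f) := by
  have hne : ∀ x ∈ juliaSet f, sphDeriv f x ≠ 0 := fun x hx h0 =>
    hcrit.subset (⟨hx, h0⟩ : x ∈ juliaSet f ∩ critSet f)
  have hlog : ContinuousOn (fun x => Real.log (sphDeriv f x)) (juliaSet f) :=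
    hf.continuous_sphDeriv.continuousOn.log hne
  obtain ⟨φ, hφ⟩ := ContinuousMap.exists_restrict_eq (isClosed_juliaSet f) ⟨_, hlog.domRestrict⟩
  exact ⟨φ, fun x hx => DFunLike.congr_fun hφ ⟨x, hx⟩⟩

lemma lyapMeas_eq_integral_of_eqOn {f : RSphere → RSphere} {J : Set RSphere} {φ : RSphere → ℝ}
    (hφ : EqOn φ (fun x => Real.log (sphDeriv f x)) J) {μ : Measure RSphere} (hμ : μ Jᶜ = 0) :
    lyapMeas f μ = ∫ x, φ x ∂μ := by
  have hJ : ∀ᵐ x ∂μ, x ∈ J := mem_ae_iff.2 hμ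
  exact integral_congr_ae (hJ.mono fun x hx => (hφ hx).symm)

lemma alphaMinusMeas_le {f : RSphere → RSphere} (hf : Continuous f) {φ : C(RSphere, ℝ)}
    (hφ : EqOn φ (fun x => Real.log (sphDeriv f x)) (juliaSet f)) {c : ℝ}
    (h : ∃ᶠ n in atTop, ∃ x ∈ juliaSet f, birkhoffAverage ℝ f φ n x ≤ c) :
    alphaMinusMeas f ≤ c := by
  have hneg : ∃ᶠ n in atTop, ∃ x ∈ juliaSet f, ∀ _ : Unit, -c ≤ birkhoffAverage ℝ f (-⇑φ) n x :=
    h.mono fun n ⟨x, hx, hle⟩ => ⟨x, hx, fun _ => by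
      rw [birkhoffAverage_neg]
      exact neg_le_neg hle⟩
  obtain ⟨μ, hμ, hinv, hμJ, hc⟩ := exists_measurePreserving_forall_le_integral hf
    (isClosed_juliaSet f) (mapsTo_juliaSet hf) (fun _ => φ.continuous.neg) hneg
  have hle : lyapMeas f μ ≤ c := by
    have hint : -c ≤ ∫ x, -φ x ∂μ := hc ()
    rw [integral_neg] at hint
    rw [lyapMeas_eq_integral_of_eqOn hφ hμJ]
    exact neg_le_neg_iff.1 hint
  refine le_trans (csInf_le ⟨-‖φ‖, ?_⟩ ⟨μ, hμ, hinv, hμJ, rfl⟩) hle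
  rintro _ ⟨ν, hν, -, hνJ, rfl⟩
  rw [lyapMeas_eq_integral_of_eqOn hφ hνJ]
  have hnorm : ‖∫ x, φ x ∂ν‖ ≤ ‖φ‖ * ν.real univ :=
    norm_integral_le_of_norm_le_const (.of_forall φ.norm_coe_le_norm)
  exact neg_le_of_abs_le (by simpa using hnorm)

lemma ConfDifferentiable.alphaMinusMeas_le_lyapLower {f : RSphere → RSphere}
    (hf : ConfDifferentiable f) (hcrit : juliaSet f ∩ critSet f = ∅) {x : RSphere}
    (hx : x ∈ juliaSet f) :
    alphaMinusMeas f ≤ lyapLower f x := by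
  obtain ⟨φ, hφ⟩ := hf.exists_continuousMap_eqOn_log_sphDeriv hcrit
  have horbit : ∀ i, f^[i] x ∈ juliaSet f := fun i => (mapsTo_juliaSet hf.continuous).iterate i hx
  have havg (n : ℕ) : birkhoffAverage ℝ f φ n x = Real.log (sphDeriv f^[n] x) / n := by
    rw [hf.log_sphDeriv_iterate_div fun i h0 => hcrit.subset ⟨horbit i, h0⟩]
    simp only [birkhoffAverage, birkhoffSum, hφ (horbit _)]
  refine EReal.le_of_forall_lt_iff_le.1 fun c hc => EReal.coe_le_coe_iff.2 ?_
  refine alphaMinusMeas_le hf.continuous hφ ?_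
  refine (frequently_lt_of_liminf_lt (by isBoundedDefault) hc).mono fun n hn => ⟨x, hx, ?_⟩
  exact (havg n).trans_le (EReal.coe_lt_coe_iff.1 hn).le

theorem no_exponents_beyond_extremes_general (f : RSphere → RSphere)
    (hf : ConfDifferentiable f) :
    {x | x ∈ juliaSet f ∧ (alphaPlusMeas f : EReal) < lyapUpper f x} = ∅ ∧
    (juliaSet f ∩ critSet f = ∅ →
      {x | x ∈ juliaSet f ∧ lyapLower f x < (alphaMinusMeas f : EReal)} = ∅) := by
  refine ⟨eq_empty_of_forall_notMem ?_, fun hcrit => eq_empty_of_forall_notMem ?_⟩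
  · rintro x ⟨hx, hlt⟩
    exact hlt.not_ge (hf.lyapUpper_le_alphaPlusMeas hx)
  · rintro x ⟨hx, hlt⟩
    exact hlt.not_ge (hf.alphaMinusMeas_le_lyapLower hcrit hx)

/-- **Lemma (completeness bounds for the exponents).**
For a rational map `f` of degree `≥ 2`, no point of `J` has upper Lyapunov exponent
above `α⁺`; if moreover `J` contains no critical point, no point of `J` has lower
Lyapunov exponent below `α⁻`. Here `α^±` are the extremal Lyapunov exponents of
invariant probability measures on `J`. -/
theorem no_exponents_beyond_extremes (f : RSphere → RSphere) (p q : Polynomial ℂ)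
    (hf : IsRationalMap f p q) (hdeg : 2 ≤ ratDeg p q) :
    {x | x ∈ juliaSet f ∧ (alphaPlusMeas f : EReal) < lyapUpper f x} = ∅ ∧
    (juliaSet f ∩ critSet f = ∅ →
      {x | x ∈ juliaSet f ∧ lyapLower f x < (alphaMinusMeas f : EReal)} = ∅) :=
  no_exponents_beyond_extremes_general f (hf.confDifferentiable (hf.denom_ne_zero hdeg))
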